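/- If a graph H is obtained from a graph G by a labeled contraction sequence of length at most k, then δ(H) ≤ δ(G) + k. -/

import Mathlib

/-!
A contraction `(u, v)` only changes adjacencies that involve `u` or the deleted vertex `v`.
Hence if `S` is a vertex set of `G/(u, v)` other than `{u}`, a vertex of low degree in the
subgraph of `G` induced by `S \ {u}` gains at most one neighbour, namely `u`, when passing to the
subgraph of `G/(u, v)` induced by `S`. So each contraction raises the degeneracy by at most one
(`LGraph.DegenLE.contract`), and the theorem follows by induction along the sequence.
-/

/-- A finite simple labeled graph: a finite vertex set together with a symmetric,
irreflexive adjacency relation supported on the vertex set.  Two labeled graphs are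
equal iff they have the same vertex set and the same edge set. -/
structure LGraph (α : Type) where
  verts : Finset α
  Adj : α → α → Prop
  symm : ∀ {u v}, Adj u v → Adj v u
  loopless : ∀ u, ¬ Adj u u
  mem_of_adj : ∀ {u v}, Adj u v → u ∈ verts ∧ v ∈ verts

namespace LGraph

variable {α : Type}

/-- Build a labeled graph from a vertex set and an arbitrary relation
(which gets symmetrized, made irreflexive and restricted to the vertex set). -/
def mk' (vs : Finset α) (r : α → α → Prop) : LGraph α where
  verts := vs
  Adj x y := x ≠ y ∧ x ∈ vs ∧ y ∈ vs ∧ (r x y ∨ r y x)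
  symm := by
    rintro u v ⟨hne, hu, hv, hr⟩
    exact ⟨hne.symm, hv, hu, hr.symm⟩
  loopless := by
    rintro u ⟨hne, -⟩
    exact hne rfl
  mem_of_adj := by
    rintro u v ⟨-, hu, hv, -⟩
    exact ⟨hu, hv⟩

variable [DecidableEq α]

/-- The labeled contraction `G/(u,v)`: add an edge between `u` and every vertex of
`N_G(v) \ N_G[u]`, then delete `v` and all its incident edges. -/
def contract (G : LGraph α) (u v : α) : LGraph α where
  verts := G.verts.erase v
  Adj x y := x ≠ y ∧ x ∈ G.verts.erase v ∧ y ∈ G.verts.erase v ∧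
    (G.Adj x y ∨ (x = u ∧ G.Adj v y) ∨ (y = u ∧ G.Adj v x))
  symm := by
    rintro a b ⟨hne, ha, hb, h⟩
    refine ⟨hne.symm, hb, ha, ?_⟩
    rcases h with h | h | h
    · exact Or.inl (G.symm h)
    · exact Or.inr (Or.inr h)
    · exact Or.inr (Or.inl h)
  loopless := by
    rintro a ⟨hne, -⟩
    exact hne rfl
  mem_of_adj := by
    rintro a b ⟨-, ha, hb, -⟩
    exact ⟨ha, hb⟩

/-- The result `G/S` of applying a list of labeled contractions successively. -/
def contractSeq : LGraph α → List (α × α) → LGraph α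
  | G, [] => G
  | G, (u, v) :: S => (G.contract u v).contractSeq S

/-- A list of pairs is a valid labeled contraction sequence on `G` if each pair is an
edge of the current graph when it is contracted. -/
def ValidSeq : LGraph α → List (α × α) → Prop
  | _, [] => True
  | G, (u, v) :: S => G.Adj u v ∧ (G.contract u v).ValidSeq S

/-- `H` is a labeled contraction of `G` if `G/S = H` for some labeled
contraction sequence `S` on `G`. -/
def IsContractionOf (H G : LGraph α) : Prop :=
  ∃ S : List (α × α), G.ValidSeq S ∧ G.contractSeq S = H

/-- Reachability inside a set `W` of vertices, using only edges of `G` with both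
endpoints in `W`. -/
def ReachIn (G : LGraph α) (W : Finset α) (x y : α) : Prop :=
  Relation.ReflTransGen (fun a b => a ∈ W ∧ b ∈ W ∧ G.Adj a b) x y

/-- A witness structure of `G` into `H`: a partition of `V(G)` into `|V(H)|` nonempty
sets, each inducing a connected subgraph of `G` and containing exactly one vertex of
`H` (its representative), such that two distinct vertices `u, v` of `H` are adjacent
in `H` iff the sets containing them are adjacent in `G`. -/
structure IsWitnessStructure (G H : LGraph α) (W : Finset (Finset α)) : Prop where
  subset_verts : ∀ Wi ∈ W, Wi ⊆ G.verts
  nonempty : ∀ Wi ∈ W, Wi.Nonempty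
  covers : ∀ x ∈ G.verts, ∃! Wi, Wi ∈ W ∧ x ∈ Wi
  card_eq : W.card = H.verts.card
  connected : ∀ Wi ∈ W, ∀ x ∈ Wi, ∀ y ∈ Wi, G.ReachIn Wi x y
  unique_rep : ∀ Wi ∈ W, ∃! h, h ∈ H.verts ∧ h ∈ Wi
  adj_iff : ∀ u ∈ H.verts, ∀ v ∈ H.verts, u ≠ v → ∀ Wu ∈ W, ∀ Wv ∈ W,
    u ∈ Wu → v ∈ Wv → (H.Adj u v ↔ ∃ x ∈ Wu, ∃ y ∈ Wv, G.Adj x y)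

/-- The degree of `x` inside the induced subgraph on `S`. -/
noncomputable def degreeIn (G : LGraph α) (S : Finset α) (x : α) : ℕ :=
  Set.ncard {y | y ∈ S ∧ G.Adj x y}

/-- `G` is `d`-degenerate: every nonempty (induced) subgraph has a vertex of degree
at most `d`. -/
def DegenLE (G : LGraph α) (d : ℕ) : Prop :=
  ∀ S : Finset α, S ⊆ G.verts → S.Nonempty → ∃ x ∈ S, G.degreeIn S x ≤ d

/-- The degeneracy `δ(G)`: the smallest `d` such that every nonempty subgraph of `G`
has a vertex of degree at most `d`. -/
noncomputable def degeneracy (G : LGraph α) : ℕ := sInf {d | G.DegenLE d}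

/-- The degree of a vertex. -/
noncomputable def degree (G : LGraph α) (x : α) : ℕ := Set.ncard {y | G.Adj x y}

/-- The maximum degree `Δ(G)`. -/
noncomputable def maxDegree (G : LGraph α) : ℕ := G.verts.sup fun x => G.degree x

/-- The union `G ∪ H`: vertex set `V(G) ∪ V(H)` and edge set `E(G) ∪ E(H)`. -/
def union (G H : LGraph α) : LGraph α where
  verts := G.verts ∪ H.verts
  Adj x y := G.Adj x y ∨ H.Adj x y
  symm := by
    rintro u v (h | h)
    · exact Or.inl (G.symm h)
    · exact Or.inr (H.symm h)
  loopless := by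
    rintro u (h | h)
    · exact G.loopless u h
    · exact H.loopless u h
  mem_of_adj := by
    rintro u v (h | h)
    · exact ⟨Finset.mem_union_left _ (G.mem_of_adj h).1,
        Finset.mem_union_left _ (G.mem_of_adj h).2⟩
    · exact ⟨Finset.mem_union_right _ (H.mem_of_adj h).1,
        Finset.mem_union_right _ (H.mem_of_adj h).2⟩

/-- A tree decomposition of the labeled graph `G`: a tree `T` with a bag
`X_t ⊆ V(G)` for each node `t`, covering all vertices and edges, such that for every
vertex the set of nodes whose bags contain it is connected in `T`. -/
structure TreeDecomp (G : LGraph α) (ι : Type) where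
  T : SimpleGraph ι
  isTree : T.IsTree
  bag : ι → Finset α
  bag_subset : ∀ t, bag t ⊆ G.verts
  covers_vert : ∀ x ∈ G.verts, ∃ t, x ∈ bag t
  covers_edge : ∀ {u v}, G.Adj u v → ∃ t, u ∈ bag t ∧ v ∈ bag t
  coherent : ∀ (x : α) {t₁ t₂ : ι} (p : T.Walk t₁ t₂), p.IsPath →
    x ∈ bag t₁ → x ∈ bag t₂ → ∀ t ∈ p.support, x ∈ bag t

/-- `G` has a tree decomposition of width at most `w`. -/
def TreewidthLE (G : LGraph α) (w : ℕ) : Prop :=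
  ∃ (ι : Type) (D : G.TreeDecomp ι), ∀ t, (D.bag t).card ≤ w + 1

/-- The treewidth of `G`: the minimum width of a tree decomposition of `G`. -/
noncomputable def treewidth (G : LGraph α) : ℕ := sInf {w | G.TreewidthLE w}

end LGraph

namespace LGraph

/-- Every finite graph is `|V|`-degenerate, so the infimum defining `degeneracy` is attained
rather than being the junk value of an empty set. -/
theorem degenLE_degeneracy {α : Type} (G : LGraph α) : G.DegenLE G.degeneracy := by
  have hne : {d | G.DegenLE d}.Nonempty := by
    refine ⟨G.verts.card, fun S hS ⟨x, hx⟩ => ⟨x, hx, ?_⟩⟩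
    rw [← Set.ncard_coe_finset G.verts]
    exact Set.ncard_le_ncard (fun y hy => hS hy.1) G.verts.finite_toSet
  exact Nat.sInf_mem hne

theorem DegenLE.contract {α : Type} [DecidableEq α] {G : LGraph α} {d : ℕ} (h : G.DegenLE d)
    (u v : α) : (G.contract u v).DegenLE (d + 1) := by
  intro S hS hne
  have hSG : S ⊆ G.verts := hS.trans (Finset.erase_subset _ _)
  rcases (S.erase u).eq_empty_or_nonempty with hE | hE
  · -- Here `S = {u}`, and `u` has no neighbour in `S`.
    obtain ⟨x, hx⟩ := hne
    have hu : ∀ y ∈ S, y = u := fun y hy => by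
      by_contra hyu
      simpa [hE] using Finset.mem_erase.2 ⟨hyu, hy⟩
    have hempty : {y | y ∈ S ∧ (G.contract u v).Adj x y} = ∅ := by
      ext y
      simp only [Set.mem_ofPred_eq, Set.mem_empty_iff_false, iff_false]
      rintro ⟨hy, hxy⟩
      exact hxy.1 ((hu x hx).trans (hu y hy).symm)
    exact ⟨x, hx, by simp [degreeIn, hempty]⟩
  · obtain ⟨x, hx, hdeg⟩ := h (S.erase u) ((Finset.erase_subset _ _).trans hSG) hE
    obtain ⟨hxu, hxS⟩ := Finset.mem_erase.1 hx
    refine ⟨x, hxS, ?_⟩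
    have hfin : {y | y ∈ S.erase u ∧ G.Adj x y}.Finite :=
      (S.erase u).finite_toSet.subset fun y hy => hy.1
    have hsub : {y | y ∈ S ∧ (G.contract u v).Adj x y} ⊆
        insert u {y | y ∈ S.erase u ∧ G.Adj x y} := by
      rintro y ⟨hy, -, -, -, hxy⟩
      by_cases hyu : y = u
      · exact Or.inl hyu
      · refine Or.inr ⟨Finset.mem_erase.2 ⟨hyu, hy⟩, ?_⟩
        rcases hxy with hxy | hxy | hxy
        · exact hxy
        · exact absurd hxy.1 hxu
        · exact absurd hxy.1 hyu
    calc (G.contract u v).degreeIn S x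
        ≤ (insert u {y | y ∈ S.erase u ∧ G.Adj x y}).ncard :=
          Set.ncard_le_ncard hsub (hfin.insert u)
      _ ≤ G.degreeIn (S.erase u) x + 1 := Set.ncard_insert_le _ _
      _ ≤ d + 1 := Nat.succ_le_succ hdeg

theorem DegenLE.contractSeq {α : Type} [DecidableEq α] (S : List (α × α)) :
    ∀ {G : LGraph α} {d : ℕ}, G.DegenLE d → (G.contractSeq S).DegenLE (d + S.length) := by
  induction S with
  | nil => exact fun h => h
  | cons p S ih =>
    intro G d h
    have h' := ih (h.contract p.1 p.2)
    rwa [Nat.add_assoc, Nat.add_comm 1] at h'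

end LGraph

/-- If `H` is obtained from `G` by a labeled contraction sequence of
length at most `k`, then `δ(H) ≤ δ(G) + k`. -/
theorem degeneracy_contractSeq_le {α : Type} [DecidableEq α]
    (G H : LGraph α) (k : ℕ) (S : List (α × α)) (hS : G.ValidSeq S)
    (hlen : S.length ≤ k) (hSH : G.contractSeq S = H) :
    H.degeneracy ≤ G.degeneracy + k := by
  subst hSH
  have h := G.degenLE_degeneracy.contractSeq S
  exact (Nat.sInf_le h).trans (Nat.add_le_add_left hlen _)
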